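/- Let M = c + εD ∈ 𝔻ℍ[t] be a bounded monic reduced translational motion polynomial of degree n with c ∈ ℝ[t], D ∈ ℍ[t], and ν(M) = c² = N₁ⁿ for an irreducible quadratic N₁ ∈ ℝ[t]. Let t − p − εd (p, d ∈ ℍ) be a linear bounded monic reduced motion polynomial with ν(t − p − εd) = N₂ for an irreducible quadratic N₂ ∈ ℝ[t] coprime to N₁. If M admits a factorization into monic linear motion polynomial factors, then there exist D₁ ∈ ℍ[t] and d₁ ∈ ℍ such that M·(t − p − εd) = (t − p − εd₁)·(c + εD₁), where t − p − εd₁ is a motion polynomial and c + εD₁ admits a factorization into monic linear motion polynomial factors. -/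

import Mathlib

open Polynomial DualNumber TrivSqZeroExt

noncomputable section

/-- The real quaternions. -/
abbrev Hq : Type := Quaternion ℝ

/-- The dual quaternions. -/
abbrev DHq : Type := DualNumber Hq

/-- Conjugation of a dual quaternion: `(p + ε d)* = p* + ε d*`. -/
instance : Star DHq := ⟨fun x => inl (star x.fst) + inr (star x.snd)⟩

/-- Coefficient-wise (quaternion) conjugation of a polynomial. -/
def cstar {R : Type*} [Semiring R] [Star R] (A : R[X]) : R[X] :=
  A.sum fun n a => Polynomial.C (star a) * Polynomial.X ^ n

/-- The embedding `ℝ[t] → ℍ[t]`. -/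
def qPoly (f : ℝ[X]) : Hq[X] := f.map (algebraMap ℝ Hq)

/-- The embedding `ℍ[t] → 𝔻ℍ[t]` (primal part). -/
def dhQ (P : Hq[X]) : DHq[X] := P.map (inlHom Hq Hq)

/-- The embedding `ℝ[t] → 𝔻ℍ[t]`. -/
def dPoly (f : ℝ[X]) : DHq[X] := dhQ (qPoly f)

/-- The dual quaternion polynomial `P + ε D` with primal part `P` and dual part `D`. -/
def mp (P D : Hq[X]) : DHq[X] := dhQ P + Polynomial.C ε * dhQ D

/-- The primal part of a dual quaternion polynomial. -/
def primal (A : DHq[X]) : Hq[X] := A.map (fstHom ℝ Hq Hq).toRingHom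

/-- A motion polynomial: a dual quaternion polynomial whose norm polynomial
`ν(M) = M·M*` is a nonzero real polynomial. -/
def IsMotion (M : DHq[X]) : Prop := ∃ f : ℝ[X], f ≠ 0 ∧ M * cstar M = dPoly f

/-- A real polynomial divides a quaternion polynomial. -/
def RDvdQ (f : ℝ[X]) (A : Hq[X]) : Prop := ∃ B : Hq[X], A = qPoly f * B

/-- A real polynomial divides a dual quaternion polynomial. -/
def RDvdD (f : ℝ[X]) (A : DHq[X]) : Prop := ∃ B : DHq[X], A = dPoly f * B

/-- `g` is the greatest common monic real polynomial divisor of a quaternion polynomial `A`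
(with itself), i.e. `g = mrpf A`. -/
def IsMrpfQ (g : ℝ[X]) (A : Hq[X]) : Prop :=
  g.Monic ∧ RDvdQ g A ∧ ∀ f : ℝ[X], f.Monic → RDvdQ f A → f ∣ g

/-- `g` is the greatest common monic real polynomial divisor of `c ∈ ℝ[t]` and a quaternion
polynomial `A`, i.e. `g = mrpf(c, A)`. -/
def IsMrpf2 (g : ℝ[X]) (c : ℝ[X]) (A : Hq[X]) : Prop :=
  g.Monic ∧ g ∣ c ∧ RDvdQ g A ∧
    ∀ f : ℝ[X], f.Monic → f ∣ c → RDvdQ f A → f ∣ g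

/-- `g` is the greatest common monic real polynomial divisor of `c ∈ ℝ[t]` and two quaternion
polynomials `A` and `B`, i.e. `g = mrpf(c, A, B)`. -/
def IsMrpf3 (g : ℝ[X]) (c : ℝ[X]) (A B : Hq[X]) : Prop :=
  g.Monic ∧ g ∣ c ∧ RDvdQ g A ∧ RDvdQ g B ∧
    ∀ f : ℝ[X], f.Monic → f ∣ c → RDvdQ f A → RDvdQ f B → f ∣ g

/-- A quaternion polynomial is reduced: `mrpf = 1`, i.e. it has only constant real
polynomial factors. -/
def ReducedQ (A : Hq[X]) : Prop := ∀ f : ℝ[X], f.Monic → RDvdQ f A → f = 1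

/-- A dual quaternion polynomial is reduced: `mrpf = 1`. -/
def ReducedD (A : DHq[X]) : Prop := ∀ f : ℝ[X], f.Monic → RDvdD f A → f = 1

/-- Boundedness of a (monic reduced) motion polynomial: `mrpf` of its primal part has
no real root, equivalently no linear real polynomial `t - a` divides the primal part. -/
def BoundedD (M : DHq[X]) : Prop :=
  ∀ a : ℝ, ¬ RDvdQ (Polynomial.X - Polynomial.C a) (primal M)

/-- A generic motion polynomial: monic, a motion polynomial, with `mrpf` of the primal
part equal to `1`. -/
def GenericD (M : DHq[X]) : Prop :=
  M.Monic ∧ IsMotion M ∧ ReducedQ (primal M)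

/-- The monic linear dual quaternion polynomial `t - p - ε d`. -/
def lin (p d : Hq) : DHq[X] := mp (Polynomial.X - Polynomial.C p) (-Polynomial.C d)

/-- `M` admits a factorization into monic linear motion polynomial factors. -/
def HasLinFact (M : DHq[X]) : Prop :=
  ∃ L : List DHq, (∀ h ∈ L, IsMotion (Polynomial.X - Polynomial.C h)) ∧
    M = (L.map fun h => Polynomial.X - Polynomial.C h).prod

end

/-! For dual quaternions `h`, `k` with `u = h - k*`, one has
`(t - h)(t - k) u = u (t - k)(t - h)`, because `k + k*` and `k k*` are central. If `u` is
invertible, conjugation by `u` therefore swaps the two factors, and it preserves their norm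
polynomials. The difference `u` is invertible unless the two norm polynomials agree, so a linear
factor can be moved step by step past a product of linear factors of coprime norm. For a
translational motion polynomial `c + ε D`, comparing primal parts gives
`c (t - p) = (t - p') P`; since `c` is coprime to the norm of `t - p'`, it divides `P`, whence
`p' = p` and `P = c`. -/

section GeneralRing

variable {R : Type*}

theorem coeff_cstar [Semiring R] [StarAddMonoid R] (A : R[X]) (n : ℕ) :
    (cstar A).coeff n = star (A.coeff n) := by
  by_cases h : A.coeff n = 0 <;> simp [cstar, sum_def, coeff_X_pow, h]

theorem cstar_one [Semiring R] [StarRing R] : cstar (1 : R[X]) = 1 := by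
  ext1 n
  simp only [coeff_cstar, coeff_one, apply_ite star, star_one, star_zero]

theorem cstar_mul [Semiring R] [StarRing R] (A B : R[X]) :
    cstar (A * B) = cstar B * cstar A := by
  ext1 n
  simp only [coeff_cstar, coeff_mul, star_sum, star_mul]
  exact Finset.Nat.sum_antidiagonal_swap
    (f := fun x : ℕ × ℕ => star (B.coeff x.1) * star (A.coeff x.2))

theorem cstar_X_sub_C [Ring R] [StarRing R] (h : R) :
    cstar (X - C h) = X - C (star h) := by
  ext1 n
  simp only [coeff_cstar, coeff_sub, coeff_X, coeff_C, star_sub, apply_ite star, star_one,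
    star_zero]

theorem commute_X_sub_C_cstar [Ring R] [StarRing R] (x : R) [IsStarNormal x] :
    Commute (X - C x) (cstar (X - C x)) := by
  have hx : Commute (C x) (C (star x)) := (star_comm_self (x := x)).symm.map C
  rw [cstar_X_sub_C]
  exact ((Commute.refl X).sub_right (commute_X _)).sub_left
    ((commute_X _).symm.sub_right hx)

theorem semiconjBy_star_of_commute [Monoid R] [StarMul R] {u : Rˣ} {x y : R}
    (h : SemiconjBy (u : R) x y) (hy : Commute (u * star (u : R)) (star y)) :
    SemiconjBy (u : R) (star x) (star y) := by
  have hinv : SemiconjBy (↑(star u)⁻¹ : R) (star x) (star y) :=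
    SemiconjBy.units_inv_symm_left h.star_star_star
  have hu : u * star (u : R) * ↑(star u)⁻¹ = u := by
    rw [← Units.coe_star, mul_assoc, Units.mul_inv, mul_one]
  exact hu ▸ SemiconjBy.mul_left hy hinv

theorem commute_map_algebraMap {K : Type*} [CommSemiring K] [Semiring R] [Algebra K R]
    (f : K[X]) (A : R[X]) : Commute (f.map (algebraMap K R)) A :=
  letI := Polynomial.algebra K R
  Algebra.commutes f A

theorem semiconjBy_C_X_sub_C [Ring R] {u x y : R} (h : SemiconjBy u x y) :
    SemiconjBy (C u) (X - C x) (X - C y) :=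
  SemiconjBy.sub_right (commute_X (C u)).symm (h.map C)

theorem semiconjBy_C_sub_X_sub_C_mul [Ring R] {h k l : R} (hkl : Commute k l)
    (hadd : Commute h (k + l)) (hmul : Commute h (k * l)) :
    SemiconjBy (C (h - l)) ((X - C k) * (X - C h)) ((X - C h) * (X - C k)) := by
  have expand (a b : R) : (X - C a) * (X - C b) = X ^ 2 - C (a + b) * X + C (a * b) := by
    simp only [sub_mul, mul_sub, C_add, C_mul, add_mul, sq, X_mul_C]
    abel
  have hsum : SemiconjBy (h - l) (k + h) (h + k) := by
    calc (h - l) * (k + h) = (h - l) * h + (h * (k + l) - h * l - l * k) := by noncomm_ring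
      _ = (h - l) * h + ((k + l) * h - h * l - k * l) := by rw [hadd.eq, hkl.eq]
      _ = (h + k) * (h - l) := by noncomm_ring
  have hprod : SemiconjBy (h - l) (k * h) (h * k) := by
    calc (h - l) * (k * h) = h * k * h - l * k * h := by noncomm_ring
      _ = h * k * h - h * (k * l) := by rw [← hkl.eq, hmul.eq]
      _ = h * k * (h - l) := by noncomm_ring
  have hX : SemiconjBy (C (h - l)) X X := (commute_X _).symm
  rw [expand, expand]
  exact ((hX.pow_right 2).sub_right ((hsum.map C).mul_right hX)).add_right (hprod.map C)

end GeneralRing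

theorem fst_star (x : DHq) : (star x).fst = star x.fst :=
  (fst_add ..).trans (by rw [fst_inl, fst_inr, add_zero])

theorem snd_star (x : DHq) : (star x).snd = star x.snd :=
  (snd_add ..).trans (by rw [snd_inl, snd_inr, zero_add])

noncomputable instance : StarRing DHq where
  star_involutive x := by
    ext1 <;> simp only [fst_star, snd_star, star_star]
  star_mul x y := by
    ext1 <;> simp [fst_star, snd_star, add_comm]
  star_add x y := by
    ext1 <;> simp only [fst_star, snd_star, fst_add, snd_add, star_add]

theorem commute_self_star (x : DHq) : Commute x (star x) := by
  ext <;> simp [fst_star, snd_star] <;> ring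

theorem commute_add_star (x y : DHq) : Commute y (x + star x) := by
  ext <;> simp [fst_star, snd_star] <;> ring

theorem commute_mul_star (x y : DHq) : Commute y (x * star x) := by
  ext <;> simp [fst_star, snd_star] <;> ring

theorem dPoly_eq_map (f : ℝ[X]) : dPoly f = f.map (algebraMap ℝ DHq) := by
  rw [dPoly, dhQ, qPoly, Polynomial.map_map]
  rfl

theorem commute_qPoly (f : ℝ[X]) (A : Hq[X]) : Commute (qPoly f) A :=
  commute_map_algebraMap f A

theorem commute_dPoly (f : ℝ[X]) (A : DHq[X]) : Commute (dPoly f) A :=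
  dPoly_eq_map f ▸ commute_map_algebraMap f A

theorem dPoly_one : dPoly 1 = 1 := by
  rw [dPoly_eq_map, Polynomial.map_one]

theorem dPoly_mul (f g : ℝ[X]) : dPoly (f * g) = dPoly f * dPoly g := by
  simp only [dPoly_eq_map, Polynomial.map_mul]

theorem qPoly_mul (f g : ℝ[X]) : qPoly (f * g) = qPoly f * qPoly g :=
  Polynomial.map_mul _

theorem qPoly_injective : Function.Injective qPoly :=
  map_injective _ (algebraMap ℝ Hq).injective

theorem dPoly_injective : Function.Injective dPoly :=
  (map_injective _ inl_injective).comp qPoly_injective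

theorem cstar_qPoly (f : ℝ[X]) : cstar (qPoly f) = qPoly f := by
  ext1 n
  rw [coeff_cstar, qPoly, coeff_map]
  exact Quaternion.star_coe _

theorem primal_mul (A B : DHq[X]) : primal (A * B) = primal A * primal B :=
  Polynomial.map_mul _

theorem primal_cstar (A : DHq[X]) : primal (cstar A) = cstar (primal A) := by
  ext1 n
  simp only [primal, coeff_map, coeff_cstar]
  exact fst_star _

theorem primal_mp (P D : Hq[X]) : primal (mp P D) = P := by
  ext1 n
  simp [primal, mp, dhQ]

theorem primal_dPoly (f : ℝ[X]) : primal (dPoly f) = qPoly f := by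
  ext1 n
  simp [primal, dPoly, dhQ]

theorem primal_X_sub_C (h : DHq) : primal (X - C h) = X - C h.fst := by
  simp [primal]

theorem exists_eq_mp_primal (A : DHq[X]) : ∃ D, A = mp (primal A) D := by
  induction A using Polynomial.induction_on' with
  | add A B hA hB =>
    obtain ⟨D, hD⟩ := hA
    obtain ⟨E, hE⟩ := hB
    refine ⟨D + E, ?_⟩
    conv_lhs => rw [hD, hE]
    simp only [mp, dhQ, primal, Polynomial.map_add, mul_add]
    abel
  | monomial n a =>
    refine ⟨monomial n a.snd, ?_⟩
    simp only [mp, dhQ, primal, map_monomial, C_mul_monomial, ← map_add]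
    congr 1
    ext1 <;> simp

theorem lin_eq_X_sub_C (p d : Hq) : lin p d = X - C (inl p + inr d) := by
  have hd : ε * inl (-d) = (inr (-d) : DHq) := by ext1 <;> simp
  calc lin p d = X - C (inl p) + C (ε * inl (-d)) := by
        simp only [lin, mp, dhQ, ← C_neg, Polynomial.map_sub, map_X, map_C, C_mul]
        rfl
    _ = X - C (inl p) - C (inr d) := by rw [hd, inr_neg, C_neg, ← sub_eq_add_neg]
    _ = X - C (inl p + inr d) := by rw [C_add, sub_sub]

theorem mul_cstar_mul {A B : DHq[X]} {F G : ℝ[X]} (hA : A * cstar A = dPoly F)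
    (hB : B * cstar B = dPoly G) : A * B * cstar (A * B) = dPoly (F * G) := by
  calc A * B * cstar (A * B) = A * (B * cstar B) * cstar A := by
        simp only [cstar_mul, mul_assoc]
    _ = A * cstar A * dPoly G := by rw [hB, mul_assoc, (commute_dPoly G _).eq, mul_assoc]
    _ = dPoly (F * G) := by rw [hA, dPoly_mul]

theorem X_sub_C_mul_cstar_eq_of_semiconjBy {u : DHqˣ} {h h' : DHq} {N : ℝ[X]}
    (hu : SemiconjBy (u : DHq) h h') (hN : (X - C h) * cstar (X - C h) = dPoly N) :
    (X - C h') * cstar (X - C h') = dPoly N := by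
  have hstar : SemiconjBy (u : DHq) (star h) (star h') :=
    semiconjBy_star_of_commute hu (commute_mul_star _ _).symm
  have hsemi := (semiconjBy_C_X_sub_C hu).mul_right (semiconjBy_C_X_sub_C hstar)
  rw [← cstar_X_sub_C, ← cstar_X_sub_C, hN] at hsemi
  have hC : IsUnit (C (u : DHq)) := u.isUnit.map C
  exact (hC.mul_right_cancel ((commute_dPoly N _).eq.trans hsemi.eq)).symm

theorem natDegree_eq_two_of_X_sub_C_mul_cstar {h : DHq} {N : ℝ[X]}
    (hN : (X - C h) * cstar (X - C h) = dPoly N) : N.natDegree = 2 := by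
  rw [cstar_X_sub_C] at hN
  have hdeg := congrArg natDegree hN
  rwa [(monic_X_sub_C _).natDegree_mul (monic_X_sub_C _), natDegree_X_sub_C, natDegree_X_sub_C,
    dPoly_eq_map, natDegree_map_eq_of_injective (algebraMap ℝ DHq).injective, eq_comm] at hdeg

theorem isUnit_sub_star_of_norm_ne {h k : DHq} {F N : ℝ[X]}
    (hF : (X - C h) * cstar (X - C h) = dPoly F)
    (hN : (X - C k) * cstar (X - C k) = dPoly N) (hne : F ≠ N) : IsUnit (h - star k) := by
  rw [isUnit_iff_isUnit_fst, isUnit_iff_ne_zero, fst_sub, fst_star, sub_ne_zero]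
  intro heq
  refine hne (qPoly_injective ?_)
  rw [← primal_dPoly, ← primal_dPoly, ← hF, ← hN, primal_mul, primal_mul, primal_cstar,
    primal_cstar, primal_X_sub_C, primal_X_sub_C, cstar_X_sub_C, cstar_X_sub_C, heq, star_star,
    ← cstar_X_sub_C, (commute_X_sub_C_cstar k.fst).eq]

theorem eq_sq_of_mp_qPoly_mul_cstar {c F : ℝ[X]} {D : Hq[X]}
    (hF : mp (qPoly c) D * cstar (mp (qPoly c) D) = dPoly F) : F = c ^ 2 := by
  refine qPoly_injective ?_
  rw [← primal_dPoly, ← hF, primal_mul, primal_cstar, primal_mp, cstar_qPoly, sq, qPoly_mul]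

theorem HasLinFact.one : HasLinFact 1 :=
  ⟨[], by simp, by simp⟩

theorem HasLinFact.X_sub_C_mul {h : DHq} {M : DHq[X]} (hh : IsMotion (X - C h))
    (hM : HasLinFact M) : HasLinFact ((X - C h) * M) := by
  obtain ⟨L, hL, rfl⟩ := hM
  exact ⟨h :: L, List.forall_mem_cons.2 ⟨hh, hL⟩, by rw [List.map_cons, List.prod_cons]⟩

@[elab_as_elim]
theorem HasLinFact.induction {motive : ∀ M, HasLinFact M → Prop} (one : motive 1 .one)
    (X_sub_C_mul : ∀ h M (hh : IsMotion (X - C h)) (hM : HasLinFact M),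
      motive M hM → motive ((X - C h) * M) (hM.X_sub_C_mul hh))
    {M : DHq[X]} (hM : HasLinFact M) : motive M hM := by
  obtain ⟨L, hL, rfl⟩ := hM
  induction L with
  | nil => exact one
  | cons h L ih =>
    obtain ⟨hh, hL⟩ := List.forall_mem_cons.1 hL
    exact X_sub_C_mul h _ hh ⟨L, hL, rfl⟩ (ih hL)

theorem HasLinFact.isMotion {M : DHq[X]} (hM : HasLinFact M) : IsMotion M := by
  induction hM using HasLinFact.induction with
  | one => exact ⟨1, one_ne_zero, by rw [cstar_one, dPoly_one, mul_one]⟩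
  | X_sub_C_mul h M hh _ ih =>
    obtain ⟨F, hF₀, hF⟩ := hh
    obtain ⟨G, hG₀, hG⟩ := ih
    exact ⟨F * G, mul_ne_zero hF₀ hG₀, mul_cstar_mul hF hG⟩

theorem exists_flip_X_sub_C {h k : DHq} {F N : ℝ[X]}
    (hF : (X - C h) * cstar (X - C h) = dPoly F)
    (hN : (X - C k) * cstar (X - C k) = dPoly N) (hne : F ≠ N) :
    ∃ k' h' : DHq, (X - C k') * cstar (X - C k') = dPoly N ∧
      (X - C h') * cstar (X - C h') = dPoly F ∧
      (X - C h) * (X - C k) = (X - C k') * (X - C h') := by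
  obtain ⟨u, hu⟩ := isUnit_sub_star_of_norm_ne hF hN hne
  have hk := u.mk_semiconjBy k
  have hh := u.mk_semiconjBy h
  refine ⟨_, _, X_sub_C_mul_cstar_eq_of_semiconjBy hk hN,
    X_sub_C_mul_cstar_eq_of_semiconjBy hh hF, ?_⟩
  have hswap : SemiconjBy (C (u : DHq)) ((X - C k) * (X - C h)) ((X - C h) * (X - C k)) :=
    hu ▸ semiconjBy_C_sub_X_sub_C_mul (commute_self_star k) (commute_add_star k h)
      (commute_mul_star k h)
  have hconj := (semiconjBy_C_X_sub_C hk).mul_right (semiconjBy_C_X_sub_C hh)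
  exact (u.isUnit.map C).mul_right_cancel (hswap.eq.symm.trans hconj.eq)

theorem HasLinFact.exists_flip {M : DHq[X]} (hM : HasLinFact M) {F N : ℝ[X]}
    (hF : M * cstar M = dPoly F) (hcop : IsCoprime F N) {k : DHq}
    (hN : (X - C k) * cstar (X - C k) = dPoly N) :
    ∃ (k' : DHq) (M' : DHq[X]), (X - C k') * cstar (X - C k') = dPoly N ∧ HasLinFact M' ∧
      M * (X - C k) = (X - C k') * M' := by
  induction hM using HasLinFact.induction generalizing F with
  | one => exact ⟨k, 1, hN, .one, by rw [one_mul, mul_one]⟩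
  | X_sub_C_mul h M hh hM ih =>
    obtain ⟨f, hf₀, hf⟩ := hh
    obtain ⟨G, -, hG⟩ := hM.isMotion
    obtain rfl : f * G = F := dPoly_injective ((mul_cstar_mul hf hG).symm.trans hF)
    obtain ⟨k₁, M₁, hk₁, hM₁, e₁⟩ := ih hG hcop.of_mul_left_right
    have hne : f ≠ N := by
      rintro rfl
      have := natDegree_eq_zero_of_isUnit (isCoprime_self.1 hcop.of_mul_left_left)
      simp [natDegree_eq_two_of_X_sub_C_mul_cstar hf] at this
    obtain ⟨k₂, h₂, hk₂, hh₂, e₂⟩ := exists_flip_X_sub_C hf hk₁ hne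
    refine ⟨k₂, (X - C h₂) * M₁, hk₂, hM₁.X_sub_C_mul ⟨f, hf₀, hh₂⟩, ?_⟩
    rw [mul_assoc, e₁, ← mul_assoc, e₂, mul_assoc]

theorem RDvdQ.of_isCoprime_mul {f g : ℝ[X]} {A : Hq[X]} (hcop : IsCoprime f g)
    (h : RDvdQ f (qPoly g * A)) : RDvdQ f A := by
  obtain ⟨B, hB⟩ := h
  obtain ⟨u, v, huv⟩ := hcop
  have hbezout : qPoly f * qPoly u + qPoly g * qPoly v = 1 := by
    rw [← qPoly_mul, ← qPoly_mul, mul_comm f, mul_comm g, qPoly, qPoly, ← Polynomial.map_add, huv,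
      Polynomial.map_one]
  refine ⟨qPoly u * A + qPoly v * B, ?_⟩
  calc A = (qPoly f * qPoly u + qPoly g * qPoly v) * A := by rw [hbezout, one_mul]
    _ = qPoly f * (qPoly u * A) + qPoly v * (qPoly g * A) := by
      rw [(commute_qPoly g _).eq, add_mul, mul_assoc, mul_assoc]
    _ = qPoly f * (qPoly u * A + qPoly v * B) := by
      rw [hB, mul_add, ← mul_assoc (qPoly v), (commute_qPoly v _).eq, mul_assoc]

theorem eq_of_qPoly_mul_X_sub_C_eq {c N : ℝ[X]} (hc : c ≠ 0) (hcop : IsCoprime c N) {p p' : Hq}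
    {P : Hq[X]} (hN : (X - C p') * cstar (X - C p') = qPoly N)
    (h : qPoly c * (X - C p) = (X - C p') * P) : p' = p ∧ P = qPoly c := by
  have hNP : qPoly N * P = qPoly c * (cstar (X - C p') * (X - C p)) := by
    rw [← hN, (commute_X_sub_C_cstar p').eq, mul_assoc, ← h, ← mul_assoc, ← mul_assoc,
      (commute_qPoly c _).eq]
  obtain ⟨Q, rfl⟩ : RDvdQ c P := .of_isCoprime_mul hcop ⟨_, hNP⟩
  have hQ : X - C p = (X - C p') * Q := by
    have hc' : qPoly c ≠ 0 := (Polynomial.map_ne_zero_iff (algebraMap ℝ Hq).injective).2 hc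
    refine mul_left_cancel₀ hc' ?_
    rw [h, ← mul_assoc, ← mul_assoc, (commute_qPoly c _).eq]
  have hQmonic : Q.Monic := (monic_X_sub_C p').of_mul_monic_left (hQ ▸ monic_X_sub_C p)
  have hQdeg : Q.natDegree = 0 := by
    have := congrArg natDegree hQ
    rw [(monic_X_sub_C p').natDegree_mul hQmonic, natDegree_X_sub_C, natDegree_X_sub_C] at this
    lia
  obtain rfl := hQmonic.natDegree_eq_zero.1 hQdeg
  rw [mul_one] at hQ ⊢
  exact ⟨C_injective (sub_right_injective hQ.symm), rfl⟩

theorem bennett_flip_general {c N : ℝ[X]} {D : Hq[X]} {p d : Hq}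
    (hnorm : lin p d * cstar (lin p d) = dPoly N) (hcop : IsCoprime c N)
    (hfact : HasLinFact (mp (qPoly c) D)) :
    ∃ (D₁ : Hq[X]) (d₁ : Hq),
      IsMotion (lin p d₁) ∧ HasLinFact (mp (qPoly c) D₁) ∧
      mp (qPoly c) D * lin p d = lin p d₁ * mp (qPoly c) D₁ := by
  obtain ⟨F, hF₀, hF⟩ := hfact.isMotion
  obtain rfl := eq_sq_of_mp_qPoly_mul_cstar hF
  rw [lin_eq_X_sub_C] at hnorm ⊢
  obtain ⟨k, M, hk, hM, hflip⟩ := hfact.exists_flip hF hcop.pow_left hnorm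
  have hprimal := congrArg primal hflip
  rw [primal_mul, primal_mul, primal_mp, primal_X_sub_C, primal_X_sub_C, fst_add, fst_inl,
    fst_inr, add_zero] at hprimal
  have hkN := congrArg primal hk
  rw [primal_mul, primal_cstar, primal_X_sub_C, primal_dPoly] at hkN
  obtain ⟨rfl, hMc⟩ := eq_of_qPoly_mul_X_sub_C_eq (ne_zero_pow two_ne_zero hF₀) hcop hkN hprimal
  obtain ⟨D₁, rfl⟩ : ∃ D₁, M = mp (qPoly c) D₁ := hMc ▸ exists_eq_mp_primal M
  have hN₀ : N ≠ 0 := by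
    rintro rfl
    simpa using natDegree_eq_two_of_X_sub_C_mul_cstar hk
  have hlin : lin k.fst k.snd = X - C k := by
    rw [lin_eq_X_sub_C, inl_fst_add_inr_snd_eq]
  exact ⟨D₁, k.snd, hlin ▸ ⟨N, hN₀, hk⟩, hM, hlin ▸ hflip⟩

/-- Bennett flips: a linear motion polynomial factor of coprime norm can be moved to the
other side of a translational motion polynomial of primary norm. -/
theorem bennett_flip
    (n : ℕ) (c : ℝ[X]) (D : Hq[X]) (N₁ N₂ : ℝ[X]) (p d : Hq) (M : DHq[X])
    (hM : M = mp (qPoly c) D)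
    (hmonic : M.Monic) (hmotion : IsMotion M)
    (hred : ReducedD M) (hbdd : BoundedD M)
    (hdeg : M.natDegree = n)
    (hN1 : N₁.natDegree = 2) (hN1irr : Irreducible N₁)
    (hN2 : N₂.natDegree = 2) (hN2irr : Irreducible N₂)
    (hnorm : M * cstar M = dPoly (c ^ 2)) (hcN : c ^ 2 = N₁ ^ n)
    (hlmotion : IsMotion (lin p d)) (hlred : ReducedD (lin p d))
    (hlbdd : BoundedD (lin p d))
    (hlnorm : lin p d * cstar (lin p d) = dPoly N₂)
    (hcop : IsCoprime N₁ N₂)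
    (hfact : HasLinFact M) :
    ∃ (D₁ : Hq[X]) (d₁ : Hq),
      IsMotion (lin p d₁) ∧ HasLinFact (mp (qPoly c) D₁) ∧
      M * lin p d = lin p d₁ * mp (qPoly c) D₁ := by
  subst hM
  have hcop' : IsCoprime (c ^ 2) N₂ := hcN ▸ hcop.pow_left
  exact bennett_flip_general hlnorm ((IsCoprime.pow_left_iff two_pos).1 hcop') hfact
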